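/- Let G be a graph, v a vertex of G, and A the set of vertices of G outside the closed neighborhood N[v] of v. For each u ∈ A, let S_u = N(v) ∩ N(u). Suppose C is a clique that is a maximal clique of the induced subgraph G[S_u] for some u ∈ A, but C ∪ {v} is not a maximal clique of G. Then either (a) there exists u' ∈ A with C ⊆ S_{u'} and C not a maximal clique of G[S_{u'}], or (b) there exists a maximal clique K of G with v ∈ K, K \ {v} a maximal clique of G \ {v}, and C ∪ {v} properly contained in K. -/

import Mathlib

/-- `K` is a maximal clique of `G`: a clique not properly contained in any other clique. -/
def IsMaxClique {V : Type*} (G : SimpleGraph V) (K : Set V) : Prop :=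
  G.IsClique K ∧ ∀ K' : Set V, G.IsClique K' → K ⊆ K' → K = K'

/-- `K` is a maximal clique of the subgraph of `G` induced by `S`: a clique of `G`
contained in `S` that is not properly contained in any other clique of `G`
contained in `S`.  (Cliques of `G[S]` are exactly cliques of `G` contained in `S`.) -/
def IsMaxCliqueIn {V : Type*} (G : SimpleGraph V) (S : Set V) (K : Set V) : Prop :=
  K ⊆ S ∧ G.IsClique K ∧ ∀ K' : Set V, K' ⊆ S → G.IsClique K' → K ⊆ K' → K = K'

/-!
A clique is maximal exactly when no vertex is adjacent to all of it.  Extend `C ∪ {v}` to a maximal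
clique `K`.  If `K \ {v}` is not maximal in `G \ {v}`, some vertex `x ≠ v` is adjacent to all of
`K \ {v}`; maximality of `K` then forces `x` to be non-adjacent to `v`.  Hence `K \ {v}` is a clique
inside `N(v) ∩ N(x)`, and it properly contains `C`.
-/

section

variable {V : Type*} {G : SimpleGraph V} {v : V} {S C K : Set V}

theorem isMaxCliqueIn_iff_forall_exists_not_adj :
    IsMaxCliqueIn G S K ↔ K ⊆ S ∧ G.IsClique K ∧ ∀ x ∈ S, ∃ y ∈ K, ¬ G.Adj x y := by
  refine and_congr_right fun hKS => and_congr_right fun hK => ⟨fun hmax x hx => ?_, ?_⟩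
  · by_contra! hadj
    have hins : G.IsClique (insert x K) := hK.insert fun y hy _ => hadj y hy
    have heq : K = insert x K :=
      hmax _ (Set.insert_subset hx hKS) hins (Set.subset_insert x K)
    exact G.irrefl (hadj x (heq ▸ Set.mem_insert x K))
  · intro hnadj L hLS hL hKL
    refine hKL.antisymm fun x hx => ?_
    obtain ⟨y, hy, hxy⟩ := hnadj x (hLS hx)
    by_contra hxK
    exact hxy (hL hx (hKL hy) fun h => hxK (h ▸ hy))

theorem isMaxCliqueIn_univ : IsMaxCliqueIn G Set.univ K ↔ IsMaxClique G K := by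
  simp only [IsMaxCliqueIn, IsMaxClique, Set.subset_univ, true_and, true_imp_iff]

theorem IsMaxClique.exists_not_adj (hK : IsMaxClique G K) (x : V) : ∃ y ∈ K, ¬ G.Adj x y :=
  (isMaxCliqueIn_iff_forall_exists_not_adj.1 (isMaxCliqueIn_univ.2 hK)).2.2 x (Set.mem_univ x)

theorem exists_isMaxClique_superset (hC : G.IsClique C) : ∃ K, C ⊆ K ∧ IsMaxClique G K := by
  obtain ⟨K, hCK, hK⟩ := zorn_subset_nonempty {L | G.IsClique L}
    (fun c hc hchain _ => ⟨⋃₀ c, (G.isClique_sUnion hchain.directedOn).2 hc,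
      fun _ => Set.subset_sUnion_of_mem⟩) C hC
  exact ⟨K, hCK, hK.prop, fun _ hL hKL => hK.eq_of_subset hL hKL⟩

theorem IsMaxClique.exists_sdiff_subset_of_not_isMaxCliqueIn (hK : IsMaxClique G K) (hv : v ∈ K)
    (hdiff : ¬ IsMaxCliqueIn G {u | u ≠ v} (K \ {v})) :
    ∃ x ∉ G.neighborSet v ∪ {v}, K \ {v} ⊆ G.neighborSet v ∩ G.neighborSet x := by
  obtain ⟨x, hxv, hadj⟩ : ∃ x ≠ v, ∀ y ∈ K \ {v}, G.Adj x y := by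
    by_contra! hnadj
    exact hdiff (isMaxCliqueIn_iff_forall_exists_not_adj.2
      ⟨fun _ hy => hy.2, hK.1.subset Set.sdiff_subset, hnadj⟩)
  have hvx : ¬ G.Adj v x := by
    obtain ⟨y, hy, hxy⟩ := hK.exists_not_adj x
    obtain rfl : y = v := by
      by_contra hyv
      exact hxy (hadj y ⟨hy, hyv⟩)
    exact fun h => hxy h.symm
  exact ⟨x, not_or.2 ⟨hvx, hxv⟩, fun y hy => ⟨hK.1 hv hy.1 (Ne.symm hy.2), hadj y hy⟩⟩

theorem not_isMaxCliqueIn_of_ssubset (hKS : K ⊆ S) (hK : G.IsClique K) (hCK : C ⊂ K) :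
    ¬ IsMaxCliqueIn G S C :=
  fun hC => hCK.ne (hC.2.2 K hKS hK hCK.subset)

theorem non_maximal_clique_dichotomy_general (hC : G.IsClique C) (hCv : C ⊆ G.neighborSet v)
    (hnot : ¬ IsMaxClique G (C ∪ {v})) :
    (∃ u ∉ G.neighborSet v ∪ {v}, C ⊆ G.neighborSet v ∩ G.neighborSet u ∧
      ¬ IsMaxCliqueIn G (G.neighborSet v ∩ G.neighborSet u) C) ∨
    (∃ K : Set V, IsMaxClique G K ∧ v ∈ K ∧
      IsMaxCliqueIn G {u | u ≠ v} (K \ {v}) ∧ C ∪ {v} ⊂ K) := by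
  have hclique : G.IsClique (C ∪ {v}) := by
    rw [Set.union_singleton]
    exact hC.insert fun y hy _ => hCv hy
  obtain ⟨K, hsub, hK⟩ := exists_isMaxClique_superset hclique
  have hssub : C ∪ {v} ⊂ K := hsub.ssubset_of_ne fun h => hnot (h ▸ hK)
  have hvK : v ∈ K := hsub (Or.inr rfl)
  by_cases hdiff : IsMaxCliqueIn G {u | u ≠ v} (K \ {v})
  · exact Or.inr ⟨K, hK, hvK, hdiff, hssub⟩
  · obtain ⟨x, hx, hKx⟩ := hK.exists_sdiff_subset_of_not_isMaxCliqueIn hvK hdiff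
    have hCK : C ⊂ K \ {v} := by
      refine Set.ssubset_iff_subset_ne.2 ⟨fun y hy => ⟨hsub (Or.inl hy), (hCv hy).ne'⟩, ?_⟩
      rintro rfl
      exact hssub.ne (Set.sdiff_union_of_subset (Set.singleton_subset_iff.2 hvK))
    exact Or.inl ⟨x, hx, hCK.subset.trans hKx,
      not_isMaxCliqueIn_of_ssubset hKx (hK.1.subset Set.sdiff_subset) hCK⟩

end

/-- Let `A` be the set of vertices outside the closed neighborhood of `v`, and for
`u ∈ A` let `S_u = N(v) ∩ N(u)`.  If a clique `C` is a maximal clique of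
`G[S_u]` for some `u ∈ A` but `C ∪ {v}` is not a maximal clique of `G`, then
either (a) there is `u' ∈ A` with `C ⊆ S_{u'}` and `C` not maximal in
`G[S_{u'}]`, or (b) there is a maximal clique `K` of `G` with `v ∈ K`,
`K \ {v}` maximal in `G \ {v}`, and `C ∪ {v} ⊊ K`. -/
theorem non_maximal_clique_dichotomy {V : Type*} (G : SimpleGraph V) (v : V)
    (A : Set V) (hA : A = {u : V | u ∉ G.neighborSet v ∪ {v}})
    (S : V → Set V) (hS : ∀ u : V, S u = G.neighborSet v ∩ G.neighborSet u)
    (C : Set V)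
    (hC : ∃ u ∈ A, IsMaxCliqueIn G (S u) C)
    (hnot : ¬ IsMaxClique G (C ∪ {v})) :
    (∃ u' ∈ A, C ⊆ S u' ∧ ¬ IsMaxCliqueIn G (S u') C) ∨
    (∃ K : Set V, IsMaxClique G K ∧ v ∈ K ∧
      IsMaxCliqueIn G {u : V | u ≠ v} (K \ {v}) ∧ (C ∪ {v}) ⊂ K) := by
  obtain rfl : S = fun u => G.neighborSet v ∩ G.neighborSet u := funext hS
  subst hA
  obtain ⟨u, -, hCS, hclique, -⟩ := hC
  exact non_maximal_clique_dichotomy_general hclique (hCS.trans Set.inter_subset_left) hnot
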